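/- Ergodicity: suppose ε < 0 or ε > 2/π. Then T̃_ε is ergodic with respect to the Lebesgue (uniform) probability measure μ on I × I. -/

import Mathlib

open MeasureTheory Real

/-- `rmod x` is the unique representative of `x` modulo 1 lying in `[-1/2, 1/2)`. -/
noncomputable def rmod (x : ℝ) : ℝ := x - ⌊x + 1/2⌋

/-- The map `T̃_ε (p, q) = (q, ⟪2q - p - 2ε tan(π q)⟫)`. -/
noncomputable def Ttilde (ε : ℝ) : ℝ × ℝ → ℝ × ℝ := fun x =>
  (rmod x.2, rmod (2 * x.2 - x.1 - 2 * ε * Real.tan (Real.pi * x.2)))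

/-- The unit square `I × I` with `I = [-1/2, 1/2)`. -/
def unitSq : Set (ℝ × ℝ) := Set.Ico (-(1:ℝ)/2) (1/2) ×ˢ Set.Ico (-(1:ℝ)/2) (1/2)

/-- The uniform (Lebesgue) probability measure on `I × I`. -/
noncomputable def unifSq : Measure (ℝ × ℝ) := volume.restrict unitSq


lemma re_cayley_le (w : ℂ) (hw : ‖w‖ < 1) :
    ((w - 1) / (w + 1)).re ≤ -((1 - ‖w‖) / (1 + ‖w‖)) := by
  have h0 : 0 ≤ ‖w‖ := norm_nonneg w
  have hne : w + 1 ≠ 0 := by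
    intro h
    have : w = -1 := eq_neg_of_add_eq_zero_left h
    rw [this] at hw; simp at hw
  have hpos : 0 < Complex.normSq (w + 1) := Complex.normSq_pos.mpr hne
  have e1 : ((w - 1) / (w + 1)).re = (‖w‖ ^ 2 - 1) / Complex.normSq (w + 1) := by
    rw [Complex.div_re, ← Complex.normSq_eq_norm_sq, ← add_div]
    congr 1
    simp [Complex.normSq_apply]; ring
  have e2 : Complex.normSq (w + 1) ≤ (1 + ‖w‖) ^ 2 := by
    rw [Complex.normSq_eq_norm_sq]
    have := norm_add_le w 1
    rw [norm_one] at this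
    gcongr; linarith
  rw [e1, show (1 - ‖w‖) / (1 + ‖w‖) = (1 - ‖w‖^2) / (1 + ‖w‖)^2 by field_simp; ring, ← neg_div,
    div_le_div_iff₀ hpos (by positivity)]
  nlinarith [mul_nonneg (show (0:ℝ) ≤ 1 - ‖w‖^2 by nlinarith) (sub_nonneg.2 e2)]

noncomputable def gfun (k : ℤ) (κ : ℝ) (w : ℂ) : ℂ :=
  w ^ k * Complex.exp (κ * ((w - 1) / (w + 1)))

lemma gfun_norm_le (k : ℤ) {κ : ℝ} (hκ : 0 ≤ κ) (w : ℂ) (hw : ‖w‖ < 1) :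
    ‖gfun k κ w‖ ≤ ‖w‖ ^ k * Real.exp (-(κ * ((1 - ‖w‖) / (1 + ‖w‖)))) := by
  rw [gfun, norm_mul, norm_zpow, Complex.norm_exp]
  gcongr
  rw [Complex.re_ofReal_mul, ← mul_neg]
  exact mul_le_mul_of_nonneg_left (re_cayley_le w hw) hκ

lemma gfun_diff (k : ℤ) (κ : ℝ) (w : ℂ) (hw : w ≠ 0) (hw1 : w ≠ -1) :
    DifferentiableAt ℂ (gfun k κ) w := by
  have hne : w + 1 ≠ 0 := fun h => hw1 (eq_neg_of_add_eq_zero_left h)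
  unfold gfun
  refine DifferentiableAt.mul (differentiableAt_zpow.2 (Or.inl hw)) ?_
  refine DifferentiableAt.cexp ?_
  exact (DifferentiableAt.div (c := fun w : ℂ => w - 1) (d := fun w : ℂ => w + 1)
    (by fun_prop) (by fun_prop) hne).const_mul _

lemma gfun_circle_eq (k : ℤ) (κ : ℝ) {r R : ℝ} (hr : 0 < r) (hrR : r ≤ R) (hR : R < 1) :
    ∫ θ in (0:ℝ)..2 * π, gfun k κ (circleMap 0 R θ) =
      ∫ θ in (0:ℝ)..2 * π, gfun k κ (circleMap 0 r θ) := by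
  have key : ∀ ρ : ℝ, 0 < ρ → (∮ z in C(0, ρ), (z - 0)⁻¹ • gfun k κ z) =
      Complex.I * ∫ θ in (0:ℝ)..2 * π, gfun k κ (circleMap 0 ρ θ) := by
    intro ρ hρ
    rw [circleIntegral, ← intervalIntegral.integral_const_mul]
    congr 1; ext θ
    have : circleMap 0 ρ θ ≠ 0 := circleMap_ne_center hρ.ne'
    simp only [deriv_circleMap, sub_zero, smul_eq_mul]
    field_simp
  have hd : ∀ z : ℂ, r ≤ ‖z‖ → ‖z‖ ≤ R → DifferentiableAt ℂ (gfun k κ) z := by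
    intro z h1 h2
    apply gfun_diff
    · rintro rfl; simp at h1; linarith
    · rintro rfl; simp at h2; linarith
  have := Complex.circleIntegral_sub_center_inv_smul_eq_of_differentiable_on_annulus_off_countable
    (c := 0) hr hrR (f := gfun k κ) Set.countable_empty
    (fun z hz => (hd z (by simpa using hz.2) (by simpa using hz.1)).continuousAt.continuousWithinAt)
    (fun z hz => hd z (by have := hz.1.2; simp at this; exact this.le)
      (by have := hz.1.1; simp at this; exact this.le))
  rw [key R (hr.trans_le hrR), key r hr] at this
  exact mul_left_cancel₀ Complex.I_ne_zero this

lemma circleMap_ne_neg_one {θ : ℝ} (h0 : 0 < θ) (h2 : θ ≤ 2 * π) (hθ : θ ≠ π) :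
    circleMap 0 1 θ ≠ -1 := by
  intro h
  have h3 : circleMap 0 1 θ = circleMap 0 1 π := by
    rw [h]; simp [circleMap]
  have := injOn_circleMap_of_abs_sub_le (c := 0) (R := 1) one_ne_zero (a := 0) (b := 2 * π)
    (by rw [zero_sub, abs_neg, abs_of_pos Real.two_pi_pos])
  refine hθ (this ?_ ?_ h3)
  · rw [Set.uIoc_of_le (by positivity)]; exact ⟨h0, h2⟩
  · rw [Set.uIoc_of_le (by positivity)]; exact ⟨Real.pi_pos, by linarith [Real.pi_pos]⟩

lemma gfun_circle_one (k : ℤ) {κ : ℝ} (hκ : 0 ≤ κ) {r : ℝ} (hr : 0 < r) (hr1 : r < 1) :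
    ∫ θ in (0:ℝ)..2 * π, gfun k κ (circleMap 0 1 θ) =
      ∫ θ in (0:ℝ)..2 * π, gfun k κ (circleMap 0 r θ) := by
  have hn : ∀ (R θ : ℝ), 0 < R → ‖circleMap 0 R θ‖ = R := by
    intro R θ h; simp [abs_of_pos h]
  have hlim : Filter.Tendsto (fun R : ℝ => ∫ θ in (0:ℝ)..2 * π, gfun k κ (circleMap 0 R θ))
      (nhdsWithin 1 (Set.Iio 1)) (nhds (∫ θ in (0:ℝ)..2 * π, gfun k κ (circleMap 0 1 θ))) := by
    have hev : ∀ᶠ R : ℝ in nhdsWithin 1 (Set.Iio 1), R ∈ Set.Ioo r 1 :=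
      Ioo_mem_nhdsLT hr1
    refine intervalIntegral.tendsto_integral_filter_of_dominated_convergence
      (fun _ => r ^ k + 1) ?_ ?_ ?_ ?_
    · filter_upwards [hev] with R hR
      refine Continuous.aestronglyMeasurable ?_
      rw [continuous_iff_continuousAt]
      intro θ
      have hnn := hn R θ (hr.trans hR.1)
      refine ContinuousAt.comp (g := gfun k κ) (gfun_diff k κ _ ?_ ?_).continuousAt
        (continuous_circleMap 0 R).continuousAt
      · intro h; rw [h, norm_zero] at hnn; linarith [hR.1]
      · intro h; rw [h, norm_neg, norm_one] at hnn; linarith [hR.2]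
    · filter_upwards [hev] with R hR
      refine Filter.Eventually.of_forall fun θ _ => ?_
      have hnn := hn R θ (hr.trans hR.1)
      refine (gfun_norm_le k hκ _ (by rw [hnn]; exact hR.2)).trans ?_
      rw [hnn]
      have hR0 := hr.trans hR.1
      have e1 : Real.exp (-(κ * ((1 - R) / (1 + R)))) ≤ 1 := by
        rw [Real.exp_le_one_iff]
        have : 0 ≤ (1 - R) / (1 + R) := div_nonneg (by linarith [hR.2]) (by linarith)
        nlinarith [mul_nonneg hκ this]
      have e2 : R ^ k ≤ r ^ k + 1 := by
        rcases le_total 0 k with h | h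
        · have := zpow_le_one₀ hR0 hR.2.le h
          have := zpow_pos hr k
          linarith
        · have : R ^ k ≤ r ^ k := by
            obtain ⟨m, rfl⟩ : ∃ m : ℕ, k = -(m:ℤ) := ⟨k.natAbs, by omega⟩
            simp only [zpow_neg, zpow_natCast]
            have := hR.1
            gcongr
          linarith
      calc R ^ k * Real.exp (-(κ * ((1 - R) / (1 + R)))) ≤ R ^ k * 1 := by gcongr
        _ ≤ _ := by linarith
    · simp
    · have : ∀ᵐ θ : ℝ, θ ≠ π := by
        simp [ae_iff]
      filter_upwards [this] with θ hθ hm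
      rw [Set.uIoc_of_le (by positivity)] at hm
      have h1 := circleMap_ne_neg_one hm.1 hm.2 hθ
      have hc : ContinuousAt (gfun k κ) (circleMap 0 1 θ) :=
        (gfun_diff k κ _ (circleMap_ne_center one_ne_zero) h1).continuousAt
      refine (hc.tendsto.comp ?_).mono_left nhdsWithin_le_nhds
      have : Continuous fun R : ℝ => circleMap 0 R θ := by
        unfold circleMap; fun_prop
      exact this.tendsto 1
  refine tendsto_nhds_unique hlim (Filter.Tendsto.congr' ?_ tendsto_const_nhds)
  filter_upwards [Ioo_mem_nhdsLT hr1] with R hR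
  exact (gfun_circle_eq k κ hr hR.1.le hR.2).symm

lemma gfun_circle_bound (k : ℤ) {κ : ℝ} (hκ : 0 ≤ κ) {r : ℝ} (hr : 0 < r) (hr1 : r < 1) :
    ‖∫ θ in (0:ℝ)..2 * π, gfun k κ (circleMap 0 1 θ)‖ ≤
      (r ^ k * Real.exp (-(κ * ((1 - r) / (1 + r))))) * (2 * π) := by
  rw [gfun_circle_one k hκ hr hr1]
  refine (intervalIntegral.norm_integral_le_of_norm_le_const
    (C := r ^ k * Real.exp (-(κ * ((1 - r) / (1 + r))))) ?_).trans ?_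
  · intro θ _
    have hnn : ‖circleMap 0 r θ‖ = r := by simp [abs_of_pos hr]
    have := gfun_norm_le k hκ (circleMap 0 r θ) (by rw [hnn]; exact hr1)
    rwa [hnn] at this
  · rw [sub_zero, abs_of_pos Real.two_pi_pos]

lemma gfun_exp (k : ℤ) (κ : ℝ) {q : ℝ} (hq : Real.cos (π * q) ≠ 0) :
    gfun k κ (circleMap 0 1 (2 * π * q)) =
      Complex.exp (2 * π * Complex.I * k * q + Complex.I * (κ * Real.tan (π * q) : ℝ)) := by
  have hc : Complex.cos (π * q) ≠ 0 := by exact_mod_cast hq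
  have hE : Complex.exp (π * q * Complex.I) ≠ 0 := Complex.exp_ne_zero _
  have hw : circleMap 0 1 (2 * π * q) = Complex.exp (π * q * Complex.I) ^ 2 := by
    rw [← Complex.exp_nat_mul]; simp [circleMap]; ring_nf
  have hi : Complex.exp (-(π * q) * Complex.I) = (Complex.exp (π * q * Complex.I))⁻¹ := by
    rw [← Complex.exp_neg]; ring_nf
  have hdiv : (circleMap 0 1 (2 * π * q) - 1) / (circleMap 0 1 (2 * π * q) + 1) =
      Complex.I * (Real.tan (π * q) : ℝ) := by
    have hc2 : Complex.exp (π * q * Complex.I) ^ 2 + 1 ≠ 0 := by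
      intro h
      apply hc
      rw [Complex.cos, hi]
      field_simp
      rw [h]; simp
    push_cast
    rw [Complex.tan, eq_comm, ← mul_div_assoc, div_eq_div_iff hc (by rw [hw]; exact hc2), hw,
      Complex.cos, Complex.sin, hi]
    field_simp
    rw [Complex.I_sq]; ring
  rw [gfun, hdiv, Complex.exp_add]
  congr 1
  · rw [hw, ← Complex.exp_nat_mul, ← Complex.exp_int_mul]
    congr 1; push_cast; ring
  · push_cast; ring_nf

lemma osc_bound (k : ℤ) {κ : ℝ} (hκ : 0 ≤ κ) {r : ℝ} (hr : 0 < r) (hr1 : r < 1) :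
    ‖∫ q in (-(1:ℝ)/2)..(1/2),
      Complex.exp (2 * π * Complex.I * k * q + Complex.I * (κ * Real.tan (π * q) : ℝ))‖ ≤
      r ^ k * Real.exp (-(κ * ((1 - r) / (1 + r)))) := by
  have h1 : ∫ q in (-(1:ℝ)/2)..(1/2),
      Complex.exp (2 * π * Complex.I * k * q + Complex.I * (κ * Real.tan (π * q) : ℝ)) =
      ∫ q in (-(1:ℝ)/2)..(1/2), gfun k κ (circleMap 0 1 (2 * π * q)) := by
    refine intervalIntegral.integral_congr_ae ?_
    have : ∀ᵐ q : ℝ, q ≠ 1/2 := by simp [ae_iff]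
    filter_upwards [this] with q hq hm
    rw [Set.uIoc_of_le (by norm_num)] at hm
    have hlt : q < 1/2 := lt_of_le_of_ne hm.2 hq
    rw [gfun_exp]
    refine (Real.cos_pos_of_mem_Ioo ⟨?_, ?_⟩).ne'
    · nlinarith [Real.pi_pos, hm.1]
    · nlinarith [Real.pi_pos]
  have h2 : ∫ q in (-(1:ℝ)/2)..(1/2), gfun k κ (circleMap 0 1 (2 * π * q)) =
      (2 * π)⁻¹ • ∫ θ in (0:ℝ)..2 * π, gfun k κ (circleMap 0 1 θ) := by
    have hp : Function.Periodic (fun θ => gfun k κ (circleMap 0 1 θ)) (2 * π) := by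
      intro θ; exact congrArg (gfun k κ) (periodic_circleMap 0 1 θ)
    have := hp.intervalIntegral_add_eq (-π) 0
    rw [zero_add] at this
    rw [← this, intervalIntegral.integral_comp_mul_left
      (fun θ => gfun k κ (circleMap 0 1 θ)) (Real.two_pi_pos.ne')]
    congr 2 <;> ring
  rw [h1, h2, norm_smul, Real.norm_of_nonneg (by positivity)]
  have := gfun_circle_bound k hκ hr hr1
  calc _ ≤ (2 * π)⁻¹ * ((r ^ k * Real.exp (-(κ * ((1 - r) / (1 + r))))) * (2 * π)) := by gcongr
    _ = _ := by field_simp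

lemma poly_bound {θ : ℝ} (h0 : 0 ≤ θ) (h1 : θ < 1) : ∃ C ρ : ℝ, 0 ≤ C ∧ 0 < ρ ∧ ρ < 1 ∧
    ∀ n : ℕ, 2 * ((2 * n + 1) * θ ^ n) + ((2 * n + 1) * θ ^ n) ^ 2 ≤ C * ρ ^ (6 * n) := by
  set ρ : ℝ := ((1 + θ) / 2) ^ ((1:ℝ) / 6) with hρ
  have hb : 0 < (1 + θ) / 2 := by linarith
  have hρ6 : ρ ^ 6 = (1 + θ) / 2 := by
    rw [hρ, ← Real.rpow_natCast, ← Real.rpow_mul hb.le]; norm_num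
  have hρ0 : 0 < ρ := Real.rpow_pos_of_pos hb _
  have hρ1 : ρ < 1 := Real.rpow_lt_one hb.le (by linarith) (by norm_num)
  set t := θ / ρ ^ 6 with ht
  have ht0 : 0 ≤ t := by positivity
  have ht1 : t < 1 := by rw [ht, hρ6, div_lt_one hb]; linarith
  obtain ⟨B, hB⟩ := (tendsto_pow_const_mul_const_pow_of_abs_lt_one 2
    (by rwa [abs_of_nonneg ht0])).bddAbove_range
  have hB' : ∀ n : ℕ, (n:ℝ) ^ 2 * t ^ n ≤ B := fun n => hB ⟨n, rfl⟩
  have hB0 : 0 ≤ B := by have := hB' 0; simpa using this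
  refine ⟨3 * (8 * B + 2), ρ, by positivity, hρ0, hρ1, fun n => ?_⟩
  have e1 : θ ^ n = t ^ n * ρ ^ (6 * n) := by
    rw [pow_mul, ← mul_pow, ht, div_mul_cancel₀ _ (by positivity)]
  have hθn : θ ^ n ≤ 1 := pow_le_one₀ h0 h1.le
  have hθn0 : 0 ≤ θ ^ n := pow_nonneg h0 n
  have htn : t ^ n ≤ 1 := pow_le_one₀ ht0 ht1.le
  have hn : (0:ℝ) ≤ n := Nat.cast_nonneg n
  have s1 : 2 * ((2 * n + 1) * θ ^ n) + ((2 * n + 1) * θ ^ n) ^ 2 ≤ 3 * (2 * n + 1) ^ 2 * θ ^ n := by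
    have a1 : (2 * (n:ℝ) + 1) * θ ^ n ≤ (2 * n + 1) ^ 2 * θ ^ n := by
      gcongr; nlinarith
    have a2 : ((2 * (n:ℝ) + 1) * θ ^ n) ^ 2 ≤ (2 * n + 1) ^ 2 * θ ^ n := by
      rw [mul_pow]; gcongr; nlinarith
    linarith
  have s2 : (2 * (n:ℝ) + 1) ^ 2 * t ^ n ≤ 8 * B + 2 := by
    have : (2 * (n:ℝ) + 1) ^ 2 ≤ 8 * n ^ 2 + 2 := by nlinarith [sq_nonneg (2 * (n:ℝ) - 1)]
    calc (2 * (n:ℝ) + 1) ^ 2 * t ^ n ≤ (8 * n ^ 2 + 2) * t ^ n := by gcongr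
      _ = 8 * (n ^ 2 * t ^ n) + 2 * t ^ n := by ring
      _ ≤ _ := by linarith [hB' n]
  calc _ ≤ 3 * (2 * n + 1) ^ 2 * θ ^ n := s1
    _ = 3 * ((2 * n + 1) ^ 2 * t ^ n) * ρ ^ (6 * n) := by rw [e1]; ring
    _ ≤ _ := by gcongr

section hilb
variable {ι H : Type*} [NormedAddCommGroup H] [InnerProductSpace ℂ H]

lemma hb_parseval (e : HilbertBasis ι ℂ H) (x : H) :
    HasSum (fun j => ‖inner ℂ (e j) x‖ ^ 2) (‖x‖ ^ 2) := by
  have := Complex.hasSum_re (e.hasSum_inner_mul_inner x x)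
  rw [inner_self_eq_norm_sq_to_K] at this
  have e1 : (((‖x‖ : ℂ)) ^ 2).re = ‖x‖ ^ 2 := by norm_cast
  simp only [Complex.coe_algebraMap] at this
  rw [e1] at this
  refine this.congr_fun ?_ 
  intro j
  rw [← inner_conj_symm x (e j), ← Complex.normSq_eq_conj_mul_self, Complex.normSq_eq_norm_sq,
    Complex.ofReal_re]

open Classical in
lemma hb_proj (e : HilbertBasis ι ℂ H) (S : Set ι) (h : H) :
    ∃ g : H, ∀ j, inner ℂ (e j) g = if j ∈ S then inner ℂ (e j) h else 0 := by
  have hm : Memℓp (fun i => if i ∈ S then e.repr h i else 0) 2 := by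
    apply memℓp_gen
    have := (lp.memℓp (e.repr h)).summable (by norm_num)
    refine Summable.of_nonneg_of_le (fun i => by positivity) (fun i => ?_) this
    split_ifs
    · rfl
    · simp
  refine ⟨e.repr.symm ⟨_, hm⟩, fun j => ?_⟩
  rw [← e.repr_apply_apply, ← e.repr_apply_apply, LinearIsometryEquiv.apply_symm_apply]

lemma summable_rho {ρ : ℝ} (h0 : 0 < ρ) (h1 : ρ < 1) :
    Summable fun i : Fin 2 → ℤ => ρ ^ ((i 0).natAbs + (i 1).natAbs) := by
  have hz : Summable fun k : ℤ => ρ ^ k.natAbs := by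
    have := summable_geometric_of_lt_one h0.le h1
    exact Summable.of_nat_of_neg (by simpa using this) (by simpa using this)
  have := hz.mul_of_nonneg hz (fun _ => by positivity) (fun _ => by positivity)
  have h2 := (finTwoArrowEquiv ℤ).summable_iff.2 this
  refine h2.congr fun i => ?_
  simp [pow_add]

lemma abs_decay (e : HilbertBasis (Fin 2 → ℤ) ℂ H) (f : (Fin 2 → ℤ) → H)
    (hf : Orthonormal ℂ f) (h : H) (hh : ‖h‖ ≤ 1)
    (hinv : ∀ i, inner ℂ (f i) h = inner ℂ (e i) h)
    (h0 : ∀ i j, j 0 ≠ -(i 1) → inner ℂ (f i) (e j) = 0) {θ : ℝ} (hθ0 : 0 ≤ θ) (hθ1 : θ < 1)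
    (hb : ∀ i j, (i 0).natAbs ≤ (i 1).natAbs → j 0 = -(i 1) → (j 1).natAbs ≤ (i 1).natAbs →
      ‖inner ℂ (f i) (e j)‖ ≤ θ ^ (i 1).natAbs) :
    ∃ C ρ : ℝ, 0 < ρ ∧ ρ < 1 ∧ ∀ i : Fin 2 → ℤ, (i 0).natAbs ≤ (i 1).natAbs →
      ‖inner ℂ (e i) h‖ ≤ C * ρ ^ ((i 0).natAbs + (i 1).natAbs) := by
  classical
  obtain ⟨C, ρ, hC, hρ0, hρ1, hp⟩ := poly_bound hθ0 hθ1
  have hsum := summable_rho hρ0 hρ1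
  set K := ∑' i : Fin 2 → ℤ, ρ ^ ((i 0).natAbs + (i 1).natAbs) with hK
  have hK0 : 0 ≤ K := tsum_nonneg fun i => by positivity
  have hcoef : ∀ x : H, ‖x‖ ≤ 1 → ∀ j, ‖inner ℂ (e j) x‖ ≤ 1 := by
    intro x hx j
    have := norm_inner_le_norm (𝕜 := ℂ) (e j) x
    rw [e.orthonormal.1 j, one_mul] at this
    exact this.trans hx
  refine ⟨√(C * K), ρ, hρ0, hρ1, fun i₀ hi₀ => ?_⟩
  set N := (i₀ 1).natAbs with hN
  let CN : Set (Fin 2 → ℤ) := {i | (i 0).natAbs ≤ (i 1).natAbs ∧ N ≤ (i 1).natAbs}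
  let S : Set (Fin 2 → ℤ) := {j | N ≤ (j 0).natAbs ∧ (j 0).natAbs < (j 1).natAbs}
  obtain ⟨g, hg⟩ := hb_proj e S h
  have hpar := hb_parseval e h
  have hparg := hb_parseval e g
  have hg1 : ‖g‖ ≤ 1 := by
    have : ‖g‖ ^ 2 ≤ ‖h‖ ^ 2 := by
      refine hasSum_le (fun j => ?_) hparg hpar
      rw [hg]; split_ifs
      · rfl
      · simp
    exact (abs_le_of_sq_le_sq' this (norm_nonneg _)).2.trans hh
  -- the error
  have herr : ∀ i ∈ CN, ‖inner ℂ (f i) h - inner ℂ (f i) g‖ ≤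
      (2 * (i 1).natAbs + 1) * θ ^ (i 1).natAbs := by
    intro i hi
    set n := (i 1).natAbs with hn
    let D : Finset (Fin 2 → ℤ) := (Finset.Icc (-(n:ℤ)) n).image fun m => ![-(i 1), m]
    have hs := (e.hasSum_inner_mul_inner (f i) h).sub (e.hasSum_inner_mul_inner (f i) g)
    have hz : ∀ j ∉ D, inner ℂ (f i) (e j) * inner ℂ (e j) h -
        inner ℂ (f i) (e j) * inner ℂ (e j) g = 0 := by
      intro j hj
      by_cases hj0 : j 0 = -(i 1)
      · have hjS : j ∈ S := by
          have hlt : n < (j 1).natAbs := by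
            by_contra hle
            push Not at hle
            apply hj
            simp only [D, Finset.mem_image, Finset.mem_Icc]
            refine ⟨j 1, ⟨by omega, by omega⟩, ?_⟩
            ext t; fin_cases t <;> simp [hj0]
          refine ⟨?_, ?_⟩
          · rw [hj0, Int.natAbs_neg]; exact hi.2
          · rw [hj0, Int.natAbs_neg]; exact hlt
        rw [hg, if_pos hjS, sub_self]
      · rw [h0 i j hj0]; simp
    have hfin := hasSum_sum_of_ne_finset_zero (L := SummationFilter.unconditional _) hz
    rw [hs.unique hfin]
    refine (norm_sum_le _ _).trans ?_
    refine (Finset.sum_le_card_nsmul D _ (θ ^ n) ?_).trans ?_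
    · intro j hj
      simp only [D, Finset.mem_image, Finset.mem_Icc] at hj
      obtain ⟨m, hm, rfl⟩ := hj
      rw [← mul_sub, norm_mul]
      have b1 := hb i ![-(i 1), m] hi.1 (by simp) (by simp; omega)
      have b2 : ‖inner ℂ (e ![-(i 1), m]) h - inner ℂ (e ![-(i 1), m]) g‖ ≤ 1 := by
        rw [hg]
        split_ifs
        · simp
        · rw [sub_zero]; exact hcoef h hh _
      calc _ ≤ θ ^ n * 1 := by gcongr
        _ = _ := mul_one _
    · rw [nsmul_eq_mul]
      have : (D.card : ℝ) ≤ 2 * n + 1 := by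
        have h1 : D.card ≤ (Finset.Icc (-(n:ℤ)) n).card := Finset.card_image_le
        rw [Int.card_Icc] at h1
        have : D.card ≤ 2 * n + 1 := by omega
        exact_mod_cast this
      gcongr
  have hpt : ∀ i ∈ CN, ‖inner ℂ (e i) h‖ ^ 2 ≤ ‖inner ℂ (f i) g‖ ^ 2 +
      C * ρ ^ (4 * N) * ρ ^ ((i 0).natAbs + (i 1).natAbs) := by
    intro i hi
    rw [← hinv]
    have h1 := herr i hi
    set η := (2 * ((i 1).natAbs : ℝ) + 1) * θ ^ (i 1).natAbs with hη
    have hη0 : 0 ≤ η := by positivity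
    have hx : ‖inner ℂ (f i) g‖ ≤ 1 := by
      have := norm_inner_le_norm (𝕜 := ℂ) (f i) g
      rw [hf.1 i, one_mul] at this
      exact this.trans hg1
    have h2 : ‖inner ℂ (f i) h‖ ≤ ‖inner ℂ (f i) g‖ + η := by
      have := norm_add_le (inner ℂ (f i) g) (inner ℂ (f i) h - inner ℂ (f i) g)
      rw [add_sub_cancel] at this
      linarith
    have h3 : ‖inner ℂ (f i) h‖ ^ 2 ≤ (‖inner ℂ (f i) g‖ + η) ^ 2 := by gcongr
    have h4 := hp (i 1).natAbs
    rw [← hη] at h4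
    have h5 : ρ ^ (6 * (i 1).natAbs) ≤ ρ ^ (4 * N) * ρ ^ ((i 0).natAbs + (i 1).natAbs) := by
      rw [← pow_add]
      refine pow_le_pow_of_le_one hρ0.le hρ1.le ?_
      have := hi.1; have := hi.2; omega
    have h6 := mul_le_mul_of_nonneg_left h5 hC
    nlinarith [norm_nonneg (inner ℂ (f i) g), mul_nonneg hη0 (sub_nonneg.2 hx)]
  -- sums
  have hS1 : Summable (CN.indicator fun i => ‖inner ℂ (e i) h‖ ^ 2) := hpar.summable.indicator _
  have hbes : Summable fun i => ‖inner ℂ (f i) g‖ ^ 2 := hf.inner_products_summable g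
  have hle : ∑' i, CN.indicator (fun i => ‖inner ℂ (e i) h‖ ^ 2) i ≤
      ‖g‖ ^ 2 + C * ρ ^ (4 * N) * K := by
    calc _ ≤ ∑' i : Fin 2 → ℤ, (‖inner ℂ (f i) g‖ ^ 2 +
          C * ρ ^ (4 * N) * ρ ^ ((i 0).natAbs + (i 1).natAbs)) := by
          refine Summable.tsum_le_tsum (fun i => ?_) hS1 (hbes.add (hsum.mul_left _))
          by_cases hi : i ∈ CN
          · rw [Set.indicator_of_mem hi]; exact hpt i hi
          · rw [Set.indicator_of_notMem hi]; positivity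
      _ = ∑' i, ‖inner ℂ (f i) g‖ ^ 2 + C * ρ ^ (4 * N) * K := by
          rw [Summable.tsum_add hbes (hsum.mul_left _), tsum_mul_left]
      _ ≤ _ := by
          gcongr
          exact hf.tsum_inner_products_le g
  have hge : ‖inner ℂ (e i₀) h‖ ^ 2 + ‖g‖ ^ 2 ≤
      ∑' i, CN.indicator (fun i => ‖inner ℂ (e i) h‖ ^ 2) i := by
    have := (hasSum_ite_eq i₀ (‖inner ℂ (e i₀) h‖ ^ 2)).add hparg
    refine hasSum_le (fun j => ?_) this hS1.hasSum
    simp only [hg]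
    by_cases hj : j = i₀
    · subst hj
      have h1 : j ∉ S := fun hs => by have := hs.1; have := hs.2; omega
      have h2 : j ∈ CN := ⟨hi₀, le_rfl⟩
      simp [h1, h2]
    · by_cases hjS : j ∈ S
      · have h2 : j ∈ CN := ⟨hjS.2.le, by have := hjS.1; have := hjS.2; omega⟩
        simp [hj, hjS, h2]
      · simp only [hj, hjS, if_false]
        simp
        exact Set.indicator_nonneg (fun _ _ => by positivity) _
  have hfinal : ‖inner ℂ (e i₀) h‖ ^ 2 ≤ C * K * ρ ^ (4 * N) := by linarith
  have hsq : ‖inner ℂ (e i₀) h‖ ≤ √(C * K) * ρ ^ (2 * N) := by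
    refine abs_le_of_sq_le_sq' ?_ (by positivity) |>.2
    rw [mul_pow, Real.sq_sqrt (by positivity), ← pow_mul]
    refine hfinal.trans_eq ?_
    ring_nf
  refine hsq.trans ?_
  gcongr ?_ * ?_
  exact pow_le_pow_of_le_one hρ0.le hρ1.le (by omega)

end hilb

noncomputable def nuI : Measure ℝ := volume.restrict (Set.Ico (-(1:ℝ)/2) (1/2))

noncomputable def haarC : Measure (AddCircle (1:ℝ)) := AddCircle.haarAddCircle

noncomputable def muX : Measure (Fin 2 → AddCircle (1:ℝ)) :=
  Measure.pi fun _ => AddCircle.haarAddCircle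

instance : IsProbabilityMeasure (haarC) := by unfold haarC; infer_instance
instance : IsProbabilityMeasure muX := by unfold muX; infer_instance
instance : Measure.IsOpenPosMeasure muX := by unfold muX; infer_instance
instance : IsProbabilityMeasure nuI := ⟨by simp [nuI]; norm_num⟩

lemma unifSq_eq : unifSq = nuI.prod nuI := by
  rw [unifSq, unitSq, nuI, Measure.prod_restrict]; rfl

instance : IsProbabilityMeasure unifSq := by rw [unifSq_eq]; infer_instance

noncomputable def sec1 (t : AddCircle (1:ℝ)) : ℝ :=
  (AddCircle.measurableEquivIco (1:ℝ) (-(1:ℝ)/2) t : ℝ)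

lemma sec1_meas : Measurable sec1 :=
  measurable_subtype_coe.comp (AddCircle.measurableEquivIco (1:ℝ) (-(1:ℝ)/2)).measurable

lemma sec1_coe (x : ℝ) : sec1 (x : AddCircle (1:ℝ)) = rmod x := by
  change ((AddCircle.equivIco (1:ℝ) (-(1:ℝ)/2) x : Set.Ico (-(1:ℝ)/2) (-(1:ℝ)/2 + 1)) : ℝ) = _
  rw [AddCircle.equivIco, QuotientAddGroup.equivIcoMod_coe]
  simp only [toIcoMod, toIcoDiv_eq_floor, rmod]
  simp; ring_nf

lemma coe_sec1 (t : AddCircle (1:ℝ)) : ((sec1 t : ℝ) : AddCircle (1:ℝ)) = t :=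
  AddCircle.coe_equivIco

lemma rmod_of_mem {x : ℝ} (hx : x ∈ Set.Ico (-(1:ℝ)/2) (1/2)) : rmod x = x := by
  have : ⌊x + 1/2⌋ = 0 := by
    rw [Int.floor_eq_zero_iff]; constructor <;> linarith [hx.1, hx.2]
  rw [rmod, this]; simp

lemma rmod_mem (x : ℝ) : rmod x ∈ Set.Ico (-(1:ℝ)/2) (1/2) := by
  unfold rmod
  constructor
  · linarith [Int.floor_le (x + 1/2)]
  · linarith [Int.lt_floor_add_one (x + 1/2)]

lemma rmod_meas : Measurable rmod := by
  unfold rmod; fun_prop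

lemma coe_rmod (x : ℝ) : ((rmod x : ℝ) : AddCircle (1:ℝ)) = x := by
  rw [← sec1_coe, coe_sec1]

lemma rmod_sub_rmod (a b : ℝ) : rmod (a - rmod b) = rmod (a - b) := by
  rw [← sec1_coe (a - rmod b), ← sec1_coe (a - b), AddCircle.coe_sub, AddCircle.coe_sub, coe_rmod]

lemma nuI_mem : ∀ᵐ x ∂nuI, x ∈ Set.Ico (-(1:ℝ)/2) (1/2) :=
  ae_restrict_mem measurableSet_Ico

lemma unifSq_mem : ∀ᵐ x ∂unifSq, x ∈ unitSq :=
  ae_restrict_mem (measurableSet_Ico.prod measurableSet_Ico)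

lemma mk_mp : MeasurePreserving (fun x : ℝ => (x : AddCircle (1:ℝ))) nuI haarC := by
  have h := AddCircle.measurePreserving_mk (1:ℝ) (-(1:ℝ)/2)
  rw [AddCircle.volume_eq_smul_haarAddCircle, ENNReal.ofReal_one, one_smul] at h
  have e : nuI = volume.restrict (Set.Ioc (-(1:ℝ)/2) (-(1:ℝ)/2 + 1)) := by
    rw [nuI, show -(1:ℝ)/2 + 1 = 1/2 by norm_num]
    exact restrict_Ico_eq_restrict_Ioc
  rw [e]; exact h

lemma sec1_mp : MeasurePreserving sec1 haarC nuI := by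
  refine ⟨sec1_meas, ?_⟩
  rw [← mk_mp.map_eq, Measure.map_map sec1_meas mk_mp.measurable]
  conv_rhs => rw [← Measure.map_id (μ := nuI)]
  refine Measure.map_congr ?_
  filter_upwards [nuI_mem] with x hx
  simp [sec1_coe, rmod_of_mem hx]

noncomputable def sc (t : Fin 2 → AddCircle (1:ℝ)) : ℝ × ℝ := (sec1 (t 0), sec1 (t 1))

lemma sc_mp : MeasurePreserving sc muX unifSq := by
  rw [unifSq_eq]
  exact (sec1_mp.prod sec1_mp).comp
    (measurePreserving_piFinTwo (fun _ : Fin 2 => (AddCircle.haarAddCircle : Measure (AddCircle (1:ℝ)))))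

lemma rmod_sub_mp (c : ℝ) : MeasurePreserving (fun p => rmod (c - p)) nuI nuI := by
  have h1 : MeasurePreserving (fun t : AddCircle (1:ℝ) => (c : AddCircle (1:ℝ)) - t) haarC haarC :=
    Measure.measurePreserving_sub_left (AddCircle.haarAddCircle (T := (1:ℝ))) (c : AddCircle (1:ℝ))
  have := sec1_mp.comp (h1.comp mk_mp)
  convert this using 1
  ext p
  simp only [Function.comp]
  rw [← AddCircle.coe_sub, sec1_coe]

lemma tan_meas : Measurable Real.tan := by
  have : Real.tan = fun x => Real.sin x / Real.cos x := by ext x; exact Real.tan_eq_sin_div_cos x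
  rw [this]; fun_prop

lemma T_meas (ε : ℝ) : Measurable (Ttilde ε) := by
  unfold Ttilde
  refine (rmod_meas.comp measurable_snd).prodMk (rmod_meas.comp ?_)
  have := tan_meas
  fun_prop

lemma T_mp (ε : ℝ) : MeasurePreserving (Ttilde ε) unifSq unifSq := by
  have hm : Measurable (Function.uncurry fun q p : ℝ =>
      rmod (2 * q - 2 * ε * Real.tan (π * q) - p)) := by
    refine rmod_meas.comp ?_
    have := tan_meas
    fun_prop
  have h1 : MeasurePreserving (fun x : ℝ × ℝ =>
      (id x.1, rmod (2 * x.1 - 2 * ε * Real.tan (π * x.1) - x.2))) (nuI.prod nuI) (nuI.prod nuI) :=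
    MeasurePreserving.skew_product (MeasurePreserving.id nuI) hm
      (Filter.Eventually.of_forall fun q => (rmod_sub_mp _).map_eq)
  have h2 := h1.comp (Measure.measurePreserving_swap (μ := nuI) (ν := nuI))
  rw [← unifSq_eq] at h2
  refine ⟨T_meas ε, ?_⟩
  refine Eq.trans (Measure.map_congr ?_) h2.map_eq
  filter_upwards [unifSq_mem] with x hx
  simp only [Ttilde, Function.comp, Prod.swap, id, rmod_of_mem hx.2]
  congr 2; ring

lemma T_inv (ε : ℝ) {x : ℝ × ℝ} (hx : x ∈ unitSq) :
    Ttilde ε (Ttilde ε x.swap).swap = x := by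
  have e1 := rmod_of_mem hx.1
  have e2 := rmod_of_mem hx.2
  ext
  · simp [Ttilde, e1]
  · simp only [Ttilde, Prod.swap, e1]
    rw [show ∀ a b c : ℝ, a - b - c = (a - c) - b by intros; ring, rmod_sub_rmod]
    ring_nf
    exact e2

noncomputable def EE (i : Fin 2 → ℤ) (x : ℝ × ℝ) : ℂ :=
  Complex.exp (2 * π * Complex.I * (i 0 * x.1 + i 1 * x.2))

lemma EE_norm (i : Fin 2 → ℤ) (x : ℝ × ℝ) : ‖EE i x‖ = 1 := by
  rw [EE, show (2 * π * Complex.I * (i 0 * x.1 + i 1 * x.2) : ℂ) =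
    ((2 * π * (i 0 * x.1 + i 1 * x.2) : ℝ) : ℂ) * Complex.I by push_cast; ring]
  exact Complex.norm_exp_ofReal_mul_I _

lemma EE_meas (i : Fin 2 → ℤ) : Measurable (EE i) := by
  unfold EE; fun_prop

lemma EE_sc (i : Fin 2 → ℤ) (t : Fin 2 → AddCircle (1:ℝ)) :
    EE i (sc t) = UnitAddTorus.mFourier i t := by
  have : ∀ j, t j = ((sec1 (t j) : ℝ) : AddCircle (1:ℝ)) := fun j => (coe_sec1 _).symm
  simp only [UnitAddTorus.mFourier, ContinuousMap.coe_mk, Fin.prod_univ_two]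
  rw [this 0, this 1, fourier_coe_apply, fourier_coe_apply, ← Complex.exp_add, EE]
  simp only [sc]
  congr 1
  push_cast; ring

noncomputable def LL (u : ℝ × ℝ → ℂ) (hu : Measurable u) (hb : ∀ x, ‖u x‖ ≤ 1) : Lp ℂ 2 muX :=
  (MemLp.of_bound (μ := muX) (f := u ∘ sc) (hu.comp sc_mp.measurable).aestronglyMeasurable 1
    (Filter.Eventually.of_forall fun t => hb (sc t))).toLp _

lemma LL_coe (u : ℝ × ℝ → ℂ) (hu : Measurable u) (hb : ∀ x, ‖u x‖ ≤ 1) :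
    LL u hu hb =ᵐ[muX] u ∘ sc := MemLp.coeFn_toLp _

lemma int_sc (u : ℝ × ℝ → ℂ) (hu : Measurable u) : ∫ t, u (sc t) ∂muX = ∫ x, u x ∂unifSq := by
  rw [← sc_mp.map_eq, integral_map sc_mp.measurable.aemeasurable hu.aestronglyMeasurable]

lemma int_T (ε : ℝ) (u : ℝ × ℝ → ℂ) (hu : Measurable u) :
    ∫ x, u (Ttilde ε x) ∂unifSq = ∫ x, u x ∂unifSq := by
  conv_rhs => rw [← (T_mp ε).map_eq]
  rw [integral_map (T_meas ε).aemeasurable hu.aestronglyMeasurable]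

lemma LL_inner (u v : ℝ × ℝ → ℂ) (hu : Measurable u) (hb : ∀ x, ‖u x‖ ≤ 1)
    (hv : Measurable v) (hbv : ∀ x, ‖v x‖ ≤ 1) :
    inner ℂ (LL u hu hb) (LL v hv hbv) = ∫ x, (starRingEnd ℂ) (u x) * v x ∂unifSq := by
  rw [L2.inner_def, ← int_sc _ (by fun_prop)]
  refine integral_congr_ae ?_
  filter_upwards [LL_coe u hu hb, LL_coe v hv hbv] with t h1 h2
  rw [h1, h2]
  simp [mul_comm]

lemma LL_norm (u : ℝ × ℝ → ℂ) (hu : Measurable u) (hb : ∀ x, ‖u x‖ ≤ 1) :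
    ‖LL u hu hb‖ ≤ 1 := by
  have := Lp.norm_le_of_ae_bound (p := 2) (μ := muX) (f := LL u hu hb) (C := 1) zero_le_one ?_
  · have hm : measureUnivNNReal muX = 1 := by ext; simp [measureUnivNNReal]
    rw [hm] at this
    simpa using this
  · filter_upwards [LL_coe u hu hb] with t h1
    rw [h1]; exact hb _

noncomputable def tb : HilbertBasis (Fin 2 → ℤ) ℂ (Lp ℂ 2 muX) :=
  UnitAddTorus.mFourierBasis (d := Fin 2)

lemma tb_eq (i : Fin 2 → ℤ) :
    tb i = ContinuousMap.toLp (E := ℂ) 2 muX ℂ (UnitAddTorus.mFourier i) := by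
  have : (tb : (Fin 2 → ℤ) → Lp ℂ 2 muX) = UnitAddTorus.mFourierLp 2 :=
    UnitAddTorus.coe_mFourierBasis (d := Fin 2)
  rw [this]; rfl

lemma tb_LL (i : Fin 2 → ℤ) : tb i = LL (EE i) (EE_meas i) (fun x => (EE_norm i x).le) := by
  rw [tb_eq]
  apply Lp.ext
  filter_upwards [ContinuousMap.coeFn_toLp (p := 2) (𝕜 := ℂ) muX (UnitAddTorus.mFourier i),
    LL_coe (EE i) (EE_meas i) (fun x => (EE_norm i x).le)] with t h1 h2
  rw [h1, h2, Function.comp, EE_sc]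

noncomputable def ff (ε : ℝ) (i : Fin 2 → ℤ) : Lp ℂ 2 muX :=
  LL (EE i ∘ Ttilde ε) ((EE_meas i).comp (T_meas ε)) (fun x => (EE_norm i _).le)

lemma ff_orth (ε : ℝ) : Orthonormal ℂ (ff ε) := by
  rw [orthonormal_iff_ite]
  intro i j
  rw [← orthonormal_iff_ite.1 tb.orthonormal i j, tb_LL, tb_LL, ff, ff, LL_inner, LL_inner]
  have h1 := EE_meas i
  have h2 := EE_meas j
  exact int_T ε (fun x => (starRingEnd ℂ) (EE i x) * EE j x) (by fun_prop)

noncomputable def ind (s : Set (ℝ × ℝ)) : ℝ × ℝ → ℂ := s.indicator 1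

lemma ind_meas {s : Set (ℝ × ℝ)} (hs : MeasurableSet s) : Measurable (ind s) :=
  measurable_one.indicator hs

lemma ind_norm (s : Set (ℝ × ℝ)) (x : ℝ × ℝ) : ‖ind s x‖ ≤ 1 := by
  unfold ind
  by_cases h : x ∈ s <;> simp [h]

noncomputable def hs (s : Set (ℝ × ℝ)) (h : MeasurableSet s) : Lp ℂ 2 muX :=
  LL (ind s) (ind_meas h) (ind_norm s)

lemma ff_inv (ε : ℝ) (s : Set (ℝ × ℝ)) (h : MeasurableSet s)
    (hT : ∀ x ∈ unitSq, (Ttilde ε x ∈ s ↔ x ∈ s)) (i : Fin 2 → ℤ) :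
    inner ℂ (ff ε i) (hs s h) = inner ℂ (tb i) (hs s h) := by
  rw [tb_LL, ff, hs, LL_inner, LL_inner]
  have h1 := EE_meas i
  have h2 := ind_meas h
  rw [← int_T ε (fun x => (starRingEnd ℂ) (EE i x) * ind s x) (by fun_prop)]
  refine integral_congr_ae ?_
  filter_upwards [unifSq_mem] with x hx
  have : ind s (Ttilde ε x) = ind s x := by
    have := hT x hx
    unfold ind
    by_cases hh : x ∈ s
    · simp [hh, this.2 hh]
    · have h3 : Ttilde ε x ∉ s := fun hc => hh (this.1 hc)
      simp [hh, h3]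
  simp only [this, Function.comp]

lemma exp_rmod (n : ℤ) (y : ℝ) :
    Complex.exp (2 * π * Complex.I * (n * (rmod y : ℝ))) =
      Complex.exp (2 * π * Complex.I * (n * y)) := by
  rw [rmod, Complex.exp_eq_exp_iff_exists_int]
  refine ⟨-(n * ⌊y + 1/2⌋), ?_⟩
  push_cast; ring

lemma ff_inner (ε : ℝ) (i j : Fin 2 → ℤ) :
    inner ℂ (ff ε i) (tb j) =
      (∫ p, Complex.exp (2 * π * Complex.I * ((j 0 + i 1 : ℤ) * p)) ∂nuI) *
      ∫ q, Complex.exp (2 * π * Complex.I * (j 1 - i 0 - 2 * i 1 : ℤ) * q +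
        Complex.I * (4 * π * ε * i 1 * Real.tan (π * q) : ℝ)) ∂nuI := by
  rw [tb_LL, ff, LL_inner, ← integral_prod_mul, ← unifSq_eq]
  refine integral_congr_ae ?_
  filter_upwards [unifSq_mem] with x hx
  simp only [Function.comp, EE, Ttilde]
  rw [rmod_of_mem hx.2, mul_add, Complex.exp_add, exp_rmod, ← Complex.exp_add,
    ← Complex.exp_conj, ← Complex.exp_add, ← Complex.exp_add]
  congr 1
  simp only [map_add, map_mul, Complex.conj_I, Complex.conj_ofReal, map_ofNat, map_intCast]
  push_cast
  ring

lemma nuI_int (u : ℝ → ℂ) : ∫ q, u q ∂nuI = ∫ q in (-(1:ℝ)/2)..(1/2), u q := by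
  rw [intervalIntegral.integral_of_le (by norm_num), nuI, restrict_Ico_eq_restrict_Ioc]

lemma int_exp_zero {k : ℤ} (hk : k ≠ 0) :
    ∫ p, Complex.exp (2 * π * Complex.I * (k * p)) ∂nuI = 0 := by
  rw [nuI_int]
  have hc : (2 * π * Complex.I * k : ℂ) ≠ 0 := by
    have : (k:ℂ) ≠ 0 := by exact_mod_cast hk
    simp [Real.pi_ne_zero, this]
  simp_rw [← mul_assoc]
  rw [integral_exp_mul_complex hc, div_eq_zero_iff]
  left
  rw [sub_eq_zero, Complex.exp_eq_exp_iff_exists_int]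
  refine ⟨k, ?_⟩
  push_cast; ring

lemma ff_zero (ε : ℝ) (i j : Fin 2 → ℤ) (h : j 0 ≠ -(i 1)) : inner ℂ (ff ε i) (tb j) = 0 := by
  rw [ff_inner, int_exp_zero (by omega), zero_mul]

lemma osc_bound' (k : ℤ) (κ : ℝ) {r : ℝ} (hr : 0 < r) (hr1 : r < 1) (σ : ℤ)
    (hσ : (0 ≤ κ ∧ σ = k) ∨ (κ ≤ 0 ∧ σ = -k)) :
    ‖∫ q, Complex.exp (2 * π * Complex.I * k * q + Complex.I * (κ * Real.tan (π * q) : ℝ)) ∂nuI‖ ≤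
      r ^ σ * Real.exp (-(|κ| * ((1 - r) / (1 + r)))) := by
  rcases hσ with ⟨h, rfl⟩ | ⟨h, rfl⟩
  · rw [nuI_int, abs_of_nonneg h]
    exact osc_bound _ h hr hr1
  · have := osc_bound (-k) (neg_nonneg.2 h) hr hr1
    rw [← nuI_int] at this
    rw [abs_of_nonpos h, ← RCLike.norm_conj, ← integral_conj]
    refine le_trans (le_of_eq ?_) this
    congr 1
    congr 1
    ext q
    rw [← Complex.exp_conj]
    congr 1
    simp only [map_add, map_mul, Complex.conj_I, Complex.conj_ofReal, map_ofNat,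
      map_intCast]
    push_cast
    ring

lemma ff_bound (ε : ℝ) (hε : ε < 0 ∨ 2 / π < ε) : ∃ θ : ℝ, 0 ≤ θ ∧ θ < 1 ∧
    ∀ i j : Fin 2 → ℤ, (i 0).natAbs ≤ (i 1).natAbs → j 0 = -(i 1) →
      (j 1).natAbs ≤ (i 1).natAbs → ‖inner ℂ (ff ε i) (tb j)‖ ≤ θ ^ (i 1).natAbs := by
  have red : ∀ i j : Fin 2 → ℤ, j 0 = -(i 1) → inner ℂ (ff ε i) (tb j) =
      ∫ q, Complex.exp (2 * π * Complex.I * (j 1 - i 0 - 2 * i 1 : ℤ) * q +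
        Complex.I * (4 * π * ε * i 1 * Real.tan (π * q) : ℝ)) ∂nuI := by
    intro i j h
    rw [ff_inner, h]
    simp
  have habs : ∀ (i : Fin 2 → ℤ) (c : ℝ), Real.exp (-(|4 * π * ε * i 1| * c)) =
      Real.exp (-(4 * π * |ε| * c)) ^ (i 1).natAbs := by
    intro i c
    rw [← Real.exp_nat_mul, Nat.cast_natAbs, abs_mul, abs_mul, abs_of_pos (by positivity : 0 < 4 * π)]
    push_cast; ring_nf
  rcases hε with h | h
  · refine ⟨Real.exp (-(4 * π * |ε| * ((1 - 1/2) / (1 + 1/2)))), by positivity, ?_, ?_⟩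
    · rw [Real.exp_lt_one_iff]
      have : 0 < |ε| := abs_pos.2 h.ne
      have : 0 < 4 * π * |ε| * ((1 - 1/2) / (1 + 1/2)) := by
        have : (0:ℝ) < (1 - 1/2) / (1 + 1/2) := by norm_num
        positivity
      linarith
    · intro i j h1 h2 h3
      rw [red i j h2, ← habs]
      set k := j 1 - i 0 - 2 * i 1 with hk
      have := osc_bound' k (4 * π * ε * i 1) (r := 1/2) (by norm_num) (by norm_num)
        (if i 1 ≤ 0 then k else -k) (by
          split_ifs with hi
          · left
            refine ⟨?_, rfl⟩
            have : ((i 1 : ℤ) : ℝ) ≤ 0 := by exact_mod_cast hi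
            have := mul_nonneg_of_nonpos_of_nonpos h.le this
            have := mul_nonneg (by positivity : 0 ≤ 4 * π) this
            linarith
          · right
            refine ⟨?_, rfl⟩
            have : (0:ℝ) ≤ ((i 1 : ℤ) : ℝ) := by
              have : 0 ≤ i 1 := by omega
              exact_mod_cast this
            have := mul_nonneg (by linarith : 0 ≤ -ε) this
            have := mul_nonneg (by positivity : 0 ≤ 4 * π) this
            linarith)
      refine this.trans ?_
      have hσ : (1/2 : ℝ) ^ (if i 1 ≤ 0 then k else -k) ≤ 1 := by
        refine zpow_le_one₀ (by norm_num) (by norm_num) ?_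
        split_ifs <;> omega
      exact mul_le_of_le_one_left (by positivity) hσ
  · have hε0 : 0 < ε := lt_trans (by positivity) h
    set L := π * ε with hL
    have hL2 : 2 < L := by
      rw [div_lt_iff₀ Real.pi_pos] at h; rw [hL]; linarith
    obtain ⟨r, hr1, hr2⟩ : ∃ r : ℝ, 1 / (L - 1) < r ∧ r < 1 :=
      exists_between (by rw [div_lt_one (by linarith)]; linarith)
    have hr0 : 0 < r := lt_trans (by have : 0 < L - 1 := by linarith
                                     positivity) hr1
    have hrL : 1 + r < r * L := by
      rw [div_lt_iff₀ (by linarith)] at hr1; linarith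
    refine ⟨r ^ (-4:ℤ) * Real.exp (-(4 * π * |ε| * ((1 - r) / (1 + r)))), by positivity, ?_, ?_⟩
    · have hlog : -Real.log r < L * ((1 - r) / (1 + r)) := by
        have h1 : -Real.log r ≤ (1 - r) / r := by
          have := Real.one_sub_inv_le_log_of_pos hr0
          have e : (1 - r) / r = r⁻¹ - 1 := by field_simp
          linarith
        refine h1.trans_lt ?_
        rw [← mul_div_assoc, div_lt_div_iff₀ hr0 (by linarith)]
        nlinarith [mul_pos (sub_pos.2 hr2) (sub_pos.2 hrL)]
      have e : r ^ (-4:ℤ) = Real.exp (-4 * Real.log r) := by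
        rw [← Real.rpow_intCast, Real.rpow_def_of_pos hr0]; push_cast; ring_nf
      rw [e, ← Real.exp_add, Real.exp_lt_one_iff, abs_of_pos hε0]
      rw [hL] at hlog
      nlinarith
    · intro i j h1 h2 h3
      rw [red i j h2, mul_pow, ← habs]
      set k := j 1 - i 0 - 2 * i 1 with hk
      have := osc_bound' k (4 * π * ε * i 1) hr0 hr2
        (if 0 ≤ i 1 then k else -k) (by
          split_ifs with hi
          · left
            refine ⟨?_, rfl⟩
            have : (0:ℝ) ≤ ((i 1 : ℤ) : ℝ) := by exact_mod_cast hi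
            positivity
          · right
            refine ⟨?_, rfl⟩
            have : ((i 1 : ℤ) : ℝ) ≤ 0 := by
              have : i 1 ≤ 0 := by omega
              exact_mod_cast this
            exact mul_nonpos_of_nonneg_of_nonpos (by positivity) this)
      refine this.trans ?_
      refine mul_le_mul_of_nonneg_right ?_ (by positivity)
      rw [← zpow_natCast, ← zpow_mul]
      refine zpow_le_zpow_right_of_le_one₀ hr0 hr2.le ?_
      split_ifs <;> omega

lemma half_decay (ε : ℝ) (hε : ε < 0 ∨ 2 / π < ε) (s : Set (ℝ × ℝ)) (h : MeasurableSet s)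
    (hT : ∀ x ∈ unitSq, (Ttilde ε x ∈ s ↔ x ∈ s)) :
    ∃ C ρ : ℝ, 0 < ρ ∧ ρ < 1 ∧ ∀ i : Fin 2 → ℤ, (i 0).natAbs ≤ (i 1).natAbs →
      ‖inner ℂ (tb i) (hs s h)‖ ≤ C * ρ ^ ((i 0).natAbs + (i 1).natAbs) := by
  obtain ⟨θ, h0, h1, hb⟩ := ff_bound ε hε
  exact abs_decay tb (ff ε) (ff_orth ε) (hs s h) (LL_norm _ _ _) (ff_inv ε s h hT) (ff_zero ε)
    h0 h1 hb

lemma swap_mp : MeasurePreserving (Prod.swap : ℝ × ℝ → ℝ × ℝ) unifSq unifSq := by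
  rw [unifSq_eq]; exact Measure.measurePreserving_swap

lemma coef_swap (s : Set (ℝ × ℝ)) (h : MeasurableSet s) (h' : MeasurableSet (Prod.swap ⁻¹' s))
    (i : Fin 2 → ℤ) :
    inner ℂ (tb ![i 1, i 0]) (hs (Prod.swap ⁻¹' s) h') = inner ℂ (tb i) (hs s h) := by
  rw [tb_LL, tb_LL, hs, hs, LL_inner, LL_inner]
  have h1 := EE_meas i
  have h2 := ind_meas h
  conv_rhs => rw [← swap_mp.map_eq]
  rw [integral_map swap_mp.measurable.aemeasurable
    (by apply Measurable.aestronglyMeasurable; fun_prop)]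
  congr 1
  ext x
  have e1 : EE ![i 1, i 0] x = EE i x.swap := by
    simp only [EE, Matrix.cons_val_zero, Matrix.cons_val_one, Prod.fst_swap, Prod.snd_swap]
    ring_nf
  have e2 : ind (Prod.swap ⁻¹' s) x = ind s x.swap := rfl
  simp only [e1, e2]

lemma coef_summable (ε : ℝ) (hε : ε < 0 ∨ 2 / π < ε) (s : Set (ℝ × ℝ)) (h : MeasurableSet s)
    (hT : Ttilde ε ⁻¹' s = s) : Summable fun i => ‖inner ℂ (tb i) (hs s h)‖ := by
  have hT1 : ∀ x, (Ttilde ε x ∈ s ↔ x ∈ s) := fun x => by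
    conv_rhs => rw [← hT]
    rfl
  have h' : MeasurableSet (Prod.swap ⁻¹' s) := measurable_swap h
  obtain ⟨C, ρ, a1, a2, a3⟩ := half_decay ε hε s h (fun x _ => hT1 x)
  obtain ⟨C', ρ', b1, b2, b3⟩ := half_decay ε hε _ h' (by
    intro x hx
    have hx' : x.swap ∈ unitSq := ⟨hx.2, hx.1⟩
    have := T_inv ε hx'
    rw [Prod.swap_swap] at this
    simp only [Set.mem_preimage]
    rw [← hT1 (Ttilde ε x).swap, this])
  refine Summable.of_nonneg_of_le (fun _ => norm_nonneg _) (fun i => ?_)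
    (((summable_rho a1 a2).mul_left |C|).add ((summable_rho b1 b2).mul_left |C'|))
  rcases le_total (i 0).natAbs (i 1).natAbs with hi | hi
  · have : C * ρ ^ ((i 0).natAbs + (i 1).natAbs) ≤ |C| * ρ ^ ((i 0).natAbs + (i 1).natAbs) := by
      gcongr; exact le_abs_self C
    have h2 : 0 ≤ |C'| * ρ' ^ ((i 0).natAbs + (i 1).natAbs) := by positivity
    linarith [a3 i hi]
  · have : C' * ρ' ^ ((i 0).natAbs + (i 1).natAbs) ≤ |C'| * ρ' ^ ((i 0).natAbs + (i 1).natAbs) := by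
      gcongr; exact le_abs_self C'
    have h2 : 0 ≤ |C| * ρ ^ ((i 0).natAbs + (i 1).natAbs) := by positivity
    have h3 := b3 ![i 1, i 0] (by simpa using hi)
    rw [coef_swap s h h' i] at h3
    simp only [Matrix.cons_val_zero, Matrix.cons_val_one] at h3
    rw [add_comm (i 1).natAbs] at h3
    linarith

lemma exists_cont (s : Set (ℝ × ℝ)) (h : MeasurableSet s)
    (hsum : Summable fun i => ‖inner ℂ (tb i) (hs s h)‖) :
    ∃ g : C(Fin 2 → AddCircle (1:ℝ), ℂ), ∀ᵐ t ∂muX, g t = ind s (sc t) := by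
  have hS : Summable fun i => (inner ℂ (tb i) (hs s h) : ℂ) •
      (UnitAddTorus.mFourier i : C(Fin 2 → AddCircle (1:ℝ), ℂ)) := by
    refine Summable.of_norm ?_
    refine hsum.congr fun i => ?_
    rw [norm_smul, UnitAddTorus.mFourier_norm, mul_one]
  refine ⟨∑' i, (inner ℂ (tb i) (hs s h) : ℂ) • UnitAddTorus.mFourier i, ?_⟩
  set g : C(Fin 2 → AddCircle (1:ℝ), ℂ) :=
    ∑' i, (inner ℂ (tb i) (hs s h) : ℂ) • UnitAddTorus.mFourier i with hg
  have h1 := (ContinuousMap.toLp (E := ℂ) 2 muX ℂ).hasSum hS.hasSum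
  have h2 := tb.hasSum_repr (hs s h)
  have h3 : ContinuousMap.toLp (E := ℂ) 2 muX ℂ g = hs s h := by
    refine h1.unique (h2.congr_fun fun i => ?_)
    rw [map_smul, ← tb_eq, tb.repr_apply_apply]
  filter_upwards [ContinuousMap.coeFn_toLp (p := 2) (𝕜 := ℂ) muX g,
    LL_coe (ind s) (ind_meas h) (ind_norm s)] with t e1 e2
  rw [← e1, h3, hs, e2]; rfl

instance : PreconnectedSpace (AddCircle (1:ℝ)) :=
  inferInstanceAs (PreconnectedSpace (ℝ ⧸ AddSubgroup.zmultiples (1:ℝ)))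

lemma cont_const (s : Set (ℝ × ℝ)) (g : C(Fin 2 → AddCircle (1:ℝ), ℂ))
    (hg : ∀ᵐ t ∂muX, g t = ind s (sc t)) : (∀ t, g t = 0) ∨ ∀ t, g t = 1 := by
  have h1 : (fun t => g t * (g t - 1)) = fun _ => 0 := by
    refine (Continuous.ae_eq_iff_eq muX (by fun_prop) (by fun_prop)).1 ?_
    filter_upwards [hg] with t ht
    rw [ht, ind]
    by_cases h : sc t ∈ s <;> simp [h]
  have h2 : ∀ t, g t = 0 ∨ g t = 1 := fun t => by
    have := congrFun h1 t
    rcases mul_eq_zero.1 this with h | h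
    · exact Or.inl h
    · exact Or.inr (sub_eq_zero.1 h)
  have hc : IsClopen {t | g t = 0} := by
    refine ⟨isClosed_eq g.continuous continuous_const, ?_⟩
    have : {t | g t = 0} = {t | g t = 1}ᶜ := by
      ext t
      rcases h2 t with h | h <;> simp [h]
    rw [this]
    exact (isClosed_eq g.continuous continuous_const).isOpen_compl
  rcases isClopen_iff.1 hc with h | h
  · right
    intro t
    rcases h2 t with h3 | h3
    · exact absurd (show t ∈ {t | g t = 0} from h3) (by rw [h]; simp)
    · exact h3
  · left
    intro t
    have : t ∈ {t | g t = 0} := by rw [h]; trivial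
    exact this

theorem stmt11 (ε : ℝ) (hε : ε < 0 ∨ 2 / Real.pi < ε) :
    Ergodic (Ttilde ε) unifSq := by
  refine { toMeasurePreserving := T_mp ε, aeconst_set := ?_ }
  intro s h hT
  obtain ⟨g, hg⟩ := exists_cont s h (coef_summable ε hε s h hT)
  rw [Filter.eventuallyConst_set]
  rcases cont_const s g hg with h0 | h1
  · right
    rw [← sc_mp.map_eq]
    refine (ae_map_iff (p := fun x => x ∉ s) sc_mp.measurable.aemeasurable h.compl).2 ?_
    filter_upwards [hg] with t ht hc
    rw [h0 t, ind, Set.indicator_of_mem hc] at ht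
    simp at ht
  · left
    rw [← sc_mp.map_eq]
    refine (ae_map_iff (p := fun x => x ∈ s) sc_mp.measurable.aemeasurable h).2 ?_
    filter_upwards [hg] with t ht
    by_contra hc
    rw [h1 t, ind, Set.indicator_of_notMem hc] at ht
    simp at ht
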